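/- Let F := RatFunc ℂ with the involution ~ defined on polynomials by p~(X) := conj-coefficients of p composed with −X (so that p~(s) = conj(p(−conj s)) for all s) and extended to F by (p/q)~ := p~/q~; for a matrix Γ over F let Γ~ denote the transpose of the entrywise application of ~ (so Γ~(s) = (Γ(−conj s))ᴴ). Let RH∞ ⊂ F be the subring of proper stable rational functions, J the 2μ×2μ signature matrix [[I_μ, 0],[0, −I_μ]] regarded as a constant matrix over F, and let P be a 2μ×2μ matrix over F with a doubly coprime factorization M, N, U, V, M̂, N̂, Û, V̂ over RH∞ satisfying the general Bézout identity [[V̂, −Û],[−N̂, M̂]]·[[M, U],[N, V]] = I. Define Φ := U~JU − V~JV, Λ := M~JU − N~JV, Π := M~JM − N~JN. Then the set of all 2μ×2μ matrices K over F that (i) internally stabilize P (the matrix [[I, −K],[−P, I]] is invertible over F with inverse entries in RH∞), (ii) are (J,J)-unitary (K~ J K = J as matrices over F), and (iii) have all entries proper with det(V+NQ) having a nonzero finite value at infinity, coincides with the set of matrices K = (U + MQ)(V + NQ)⁻¹, where Q ranges over all 2μ×2μ matrices with entries in RH∞ such that V + NQ is invertible over F, det(V + NQ) has numerator and denominator of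 equal degree (so its value at infinity is nonzero), and Φ + Q~Λ + Λ~Q + Q~ΠQ = 0. -/

import Mathlib

open Matrix Polynomial

/-- A rational function belongs to `RH∞` (proper stable rational functions). -/
def IsRHInf (f : RatFunc ℂ) : Prop :=
  f = 0 ∨ ((∀ z : ℂ, f.denom.IsRoot z → z.re < 0) ∧ f.num.degree ≤ f.denom.degree)

/-- A rational function is proper: numerator degree ≤ denominator degree. -/
def IsProper (f : RatFunc ℂ) : Prop :=
  f.num.degree ≤ f.denom.degree

/-- The involution `~` on polynomials: `p~(s) = conj (p (-conj s))`, i.e., the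
conjugate-coefficient polynomial composed with `-X`. -/
noncomputable def polyTilde (p : Polynomial ℂ) : Polynomial ℂ :=
  (p.map (starRingEnd ℂ)).comp (-Polynomial.X)

/-- The involution `~` on rational functions, `(p/q)~ = p~/q~`. -/
noncomputable def ratTilde (f : RatFunc ℂ) : RatFunc ℂ :=
  algebraMap (Polynomial ℂ) (RatFunc ℂ) (polyTilde f.num) /
    algebraMap (Polynomial ℂ) (RatFunc ℂ) (polyTilde f.denom)

/-- The conjugate transfer matrix over rational functions: transpose of the
entrywise involution, so that `Γ~(s) = (Γ(-conj s))ᴴ`. -/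
noncomputable def matConjTransfer {α β : Type*}
    (Γ : Matrix α β (RatFunc ℂ)) : Matrix β α (RatFunc ℂ) :=
  (Γ.map ratTilde)ᵀ

/-- A controller `K` internally stabilizes the plant `P` if the block matrix
`[[I, -K],[-P, I]]` is invertible with all entries of its inverse in `RH∞`. -/
def InternallyStabilizes {α : Type*} [Fintype α] [DecidableEq α]
    (P K : Matrix α α (RatFunc ℂ)) : Prop :=
  IsUnit (Matrix.fromBlocks 1 (-K) (-P) 1)
    ∧ ∀ i j, IsRHInf ((Matrix.fromBlocks 1 (-K) (-P) 1)⁻¹ i j)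

/-!
Write `H = [[1, -K], [-P, 1]]`. Multiplying it on the left by `W = [[V̂, Û], [N̂, M̂]]`, which by
the Bézout identity is invertible over `RH∞`, makes it block triangular with diagonal blocks `M⁻¹`
and `M̂ - N̂K`. The linear fractional maps `Q ↦ (U + MQ)(V + NQ)⁻¹` and `K ↦ (V̂K - Û)(M̂ - N̂K)⁻¹`
are mutually inverse, and `(M̂ - N̂K)⁻¹ = V + NQ`, so `H⁻¹ = [[M, MQ], [0, V + NQ]] W`. Hence `K`
is stabilizing exactly when `Q` has entries in `RH∞`. For such `Q`, the entries of `K` are proper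
iff those of `(V + NQ)⁻¹` are, iff `det (V + NQ)` is a unit of the ring of proper functions, that
is, has valuation `1` at infinity. Finally, clearing the denominator `V + NQ` turns `K~JK = J` into
`X~JX = Y~JY` with `X = U + MQ` and `Y = V + NQ`, which expands to the quadratic equation in `Q`.
-/

section SubringMatrix

variable {n : Type*} [Fintype n] [DecidableEq n]

theorem mem_subringMatrix {F : Type*} [NonAssocRing F] {R : Subring F} {A : Matrix n n F} :
    A ∈ R.matrix ↔ ∀ i j, A i j ∈ R :=
  Iff.rfl

theorem fromBlocks_mem_subringMatrix {F : Type*} [NonAssocRing F] {R : Subring F}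
    {A B C D : Matrix n n F} :
    fromBlocks A B C D ∈ R.matrix ↔
      A ∈ R.matrix ∧ B ∈ R.matrix ∧ C ∈ R.matrix ∧ D ∈ R.matrix := by
  simp only [mem_subringMatrix, Sum.forall, fromBlocks_apply₁₁, fromBlocks_apply₁₂,
    fromBlocks_apply₂₁, fromBlocks_apply₂₂, forall_and]
  tauto

theorem exists_map_subtype_of_mem_subringMatrix {F : Type*} [NonAssocRing F] {R : Subring F}
    {A : Matrix n n F} (hA : A ∈ R.matrix) : ∃ B : Matrix n n R, R.subtype.mapMatrix B = A :=
  ⟨Matrix.of fun i j => ⟨A i j, hA i j⟩, rfl⟩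

theorem det_mem_of_mem_subringMatrix {F : Type*} [CommRing F] {R : Subring F}
    {A : Matrix n n F} (hA : A ∈ R.matrix) : A.det ∈ R := by
  obtain ⟨B, rfl⟩ := exists_map_subtype_of_mem_subringMatrix hA
  rw [← RingHom.map_det]
  exact B.det.2

theorem adjugate_mem_subringMatrix {F : Type*} [CommRing F] {R : Subring F}
    {A : Matrix n n F} (hA : A ∈ R.matrix) : A.adjugate ∈ R.matrix := by
  obtain ⟨B, rfl⟩ := exists_map_subtype_of_mem_subringMatrix hA
  rw [← RingHom.map_adjugate]
  exact fun i j => (B.adjugate i j).2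

theorem inv_mem_subringMatrix_iff {F : Type*} [Field F] {R : Subring F}
    {A : Matrix n n F} (hA : A ∈ R.matrix) : A⁻¹ ∈ R.matrix ↔ A.det⁻¹ ∈ R := by
  constructor
  · intro hinv
    simpa only [det_nonsing_inv, Ring.inverse_eq_inv'] using det_mem_of_mem_subringMatrix hinv
  · intro hdet i j
    rw [inv_def, Ring.inverse_eq_inv', Matrix.smul_apply, smul_eq_mul]
    exact R.mul_mem hdet (adjugate_mem_subringMatrix hA i j)

end SubringMatrix

section LinearFractional

variable {n F : Type*} [Fintype n] [DecidableEq n] [CommRing F]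
  {A B C D A' B' C' D' Z W : Matrix n n F}

theorem fromBlocks_mul_fromBlocks_eq_one_iff {F : Type*} [NonAssocSemiring F]
    {A B C D A' B' C' D' : Matrix n n F} :
    fromBlocks A' B' C' D' * fromBlocks A B C D = 1 ↔
      A' * A + B' * C = 1 ∧ A' * B + B' * D = 0 ∧ C' * A + D' * C = 0 ∧ C' * B + D' * D = 1 := by
  rw [fromBlocks_multiply, ← fromBlocks_one, fromBlocks_inj]

theorem linearFractional_denom_mul_denom
    (hinv : fromBlocks A' B' C' D' * fromBlocks A B C D = 1) (hZ : IsUnit (D + C * Z))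
    (hW : W = (B + A * Z) * (D + C * Z)⁻¹) : (D' + C' * W) * (D + C * Z) = 1 := by
  obtain ⟨-, -, hCA, hCB⟩ := fromBlocks_mul_fromBlocks_eq_one_iff.1 hinv
  have hWmul : W * (D + C * Z) = B + A * Z := by
    rw [hW, nonsing_inv_mul_cancel_right _ _ ((isUnit_iff_isUnit_det _).1 hZ)]
  linear_combination (norm := noncomm_ring) C' * hWmul + hCB + hCA * Z

theorem linearFractional_num_mul_denom
    (hinv : fromBlocks A' B' C' D' * fromBlocks A B C D = 1) (hZ : IsUnit (D + C * Z))
    (hW : W = (B + A * Z) * (D + C * Z)⁻¹) : (B' + A' * W) * (D + C * Z) = Z := by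
  obtain ⟨hAA, hAB, -, -⟩ := fromBlocks_mul_fromBlocks_eq_one_iff.1 hinv
  have hWmul : W * (D + C * Z) = B + A * Z := by
    rw [hW, nonsing_inv_mul_cancel_right _ _ ((isUnit_iff_isUnit_det _).1 hZ)]
  linear_combination (norm := noncomm_ring) A' * hWmul + hAB + hAA * Z

theorem linearFractional_symm (hinv : fromBlocks A' B' C' D' * fromBlocks A B C D = 1)
    (h : IsUnit (D + C * Z) ∧ W = (B + A * Z) * (D + C * Z)⁻¹) :
    IsUnit (D' + C' * W) ∧ Z = (B' + A' * W) * (D' + C' * W)⁻¹ := by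
  have hdenom := linearFractional_denom_mul_denom hinv h.1 h.2
  refine ⟨.of_mul_eq_one _ hdenom, ?_⟩
  rw [inv_eq_right_inv hdenom, linearFractional_num_mul_denom hinv h.1 h.2]

theorem eq_linearFractional_iff (hinv : fromBlocks A' B' C' D' * fromBlocks A B C D = 1) :
    (IsUnit (D + C * Z) ∧ W = (B + A * Z) * (D + C * Z)⁻¹) ↔
      IsUnit (D' + C' * W) ∧ Z = (B' + A' * W) * (D' + C' * W)⁻¹ :=
  ⟨linearFractional_symm hinv, linearFractional_symm (mul_eq_one_comm.1 hinv)⟩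

end LinearFractional

/-- A doubly coprime factorization `P = N M⁻¹` over the subring `R`, with `M̂, N̂, Û, V̂` written
`Mh, Nh, Uh, Vh`; the left factorization is
`IsDoublyCoprimeFactorization.leftDenom_mul_plant`. -/
structure IsDoublyCoprimeFactorization {n F : Type*} [Fintype n] [DecidableEq n] [CommRing F]
    (R : Subring F) (P M N U V Mh Nh Uh Vh : Matrix n n F) : Prop where
  M_mem : M ∈ R.matrix
  N_mem : N ∈ R.matrix
  U_mem : U ∈ R.matrix
  V_mem : V ∈ R.matrix
  Mh_mem : Mh ∈ R.matrix
  Nh_mem : Nh ∈ R.matrix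
  Uh_mem : Uh ∈ R.matrix
  Vh_mem : Vh ∈ R.matrix
  isUnit_M : IsUnit M
  plant_eq : P = N * M⁻¹
  bezout : fromBlocks Vh (-Uh) (-Nh) Mh * fromBlocks M U N V = 1

namespace IsDoublyCoprimeFactorization

section CommRing

variable {n F : Type*} [Fintype n] [DecidableEq n] [CommRing F] {R S : Subring F}
  {P M N U V Mh Nh Uh Vh K Q : Matrix n n F}

theorem mono (h : IsDoublyCoprimeFactorization R P M N U V Mh Nh Uh Vh) (hRS : R ≤ S) :
    IsDoublyCoprimeFactorization S P M N U V Mh Nh Uh Vh where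
  M_mem i j := hRS (h.M_mem i j)
  N_mem i j := hRS (h.N_mem i j)
  U_mem i j := hRS (h.U_mem i j)
  V_mem i j := hRS (h.V_mem i j)
  Mh_mem i j := hRS (h.Mh_mem i j)
  Nh_mem i j := hRS (h.Nh_mem i j)
  Uh_mem i j := hRS (h.Uh_mem i j)
  Vh_mem i j := hRS (h.Vh_mem i j)
  isUnit_M := h.isUnit_M
  plant_eq := h.plant_eq
  bezout := h.bezout

theorem plant_mul_rightDenom (h : IsDoublyCoprimeFactorization R P M N U V Mh Nh Uh Vh) :
    P * M = N := by
  rw [h.plant_eq, nonsing_inv_mul_cancel_right _ _ ((isUnit_iff_isUnit_det _).1 h.isUnit_M)]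

theorem leftDenom_mul_plant (h : IsDoublyCoprimeFactorization R P M N U V Mh Nh Uh Vh) :
    Mh * P = Nh := by
  obtain ⟨-, -, hNM, -⟩ := fromBlocks_mul_fromBlocks_eq_one_iff.1 h.bezout
  rw [← h.isUnit_M.mul_left_inj]
  linear_combination (norm := noncomm_ring) Mh * h.plant_mul_rightDenom + hNM

theorem rightDenom_inv (h : IsDoublyCoprimeFactorization R P M N U V Mh Nh Uh Vh) :
    M⁻¹ = Vh - Uh * P := by
  obtain ⟨hVM, -, -, -⟩ := fromBlocks_mul_fromBlocks_eq_one_iff.1 h.bezout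
  refine inv_eq_left_inv ?_
  linear_combination (norm := noncomm_ring) hVM - Uh * h.plant_mul_rightDenom

theorem unimodular_mul_unimodular_inv
    (h : IsDoublyCoprimeFactorization R P M N U V Mh Nh Uh Vh) :
    fromBlocks Vh Uh Nh Mh * fromBlocks M (-U) (-N) V = 1 := by
  obtain ⟨hVM, hVU, hNM, hNU⟩ := fromBlocks_mul_fromBlocks_eq_one_iff.1 h.bezout
  refine fromBlocks_mul_fromBlocks_eq_one_iff.2 ⟨?_, ?_, ?_, ?_⟩
  · linear_combination (norm := noncomm_ring) hVM
  · linear_combination (norm := noncomm_ring) -hVU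
  · linear_combination (norm := noncomm_ring) -hNM
  · linear_combination (norm := noncomm_ring) hNU

theorem unimodular_mul_feedback
    (h : IsDoublyCoprimeFactorization R P M N U V Mh Nh Uh Vh) (K : Matrix n n F) :
    fromBlocks Vh Uh Nh Mh * fromBlocks 1 (-K) (-P) 1 =
      fromBlocks M⁻¹ (-(-Uh + Vh * K)) 0 (Mh + -Nh * K) := by
  rw [fromBlocks_multiply, fromBlocks_inj, h.rightDenom_inv]
  refine ⟨by noncomm_ring, by noncomm_ring, ?_, by noncomm_ring⟩
  linear_combination (norm := noncomm_ring) -h.leftDenom_mul_plant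

theorem isUnit_feedback_iff (h : IsDoublyCoprimeFactorization R P M N U V Mh Nh Uh Vh) :
    IsUnit (fromBlocks 1 (-K) (-P) 1) ↔ IsUnit (Mh + -Nh * K) := by
  have hW : IsUnit (fromBlocks Vh Uh Nh Mh) := .of_mul_eq_one _ h.unimodular_mul_unimodular_inv
  rw [← hW.mul_left_iff, h.unimodular_mul_feedback, isUnit_fromBlocks_zero₂₁,
    isUnit_nonsing_inv_iff, and_iff_right h.isUnit_M]

theorem feedback_inv (h : IsDoublyCoprimeFactorization R P M N U V Mh Nh Uh Vh)
    (hVNQ : IsUnit (V + N * Q)) (hK : K = (U + M * Q) * (V + N * Q)⁻¹) :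
    (fromBlocks 1 (-K) (-P) 1)⁻¹ =
      fromBlocks M (M * Q) 0 (V + N * Q) * fromBlocks Vh Uh Nh Mh := by
  have hdenom := linearFractional_denom_mul_denom h.bezout hVNQ hK
  have hnum := linearFractional_num_mul_denom h.bezout hVNQ hK
  have hMdet := (isUnit_iff_isUnit_det _).1 h.isUnit_M
  refine inv_eq_left_inv ?_
  rw [mul_assoc, h.unimodular_mul_feedback]
  refine mul_eq_one_comm.1 (fromBlocks_mul_fromBlocks_eq_one_iff.2 ⟨?_, ?_, by simp, ?_⟩)
  · simp [nonsing_inv_mul _ hMdet]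
  · rw [nonsing_inv_mul_cancel_left _ _ hMdet, neg_mul, hnum, add_neg_cancel]
  · simpa using hdenom

theorem feedback_inv_mem_iff (h : IsDoublyCoprimeFactorization R P M N U V Mh Nh Uh Vh)
    (hVNQ : IsUnit (V + N * Q)) (hK : K = (U + M * Q) * (V + N * Q)⁻¹) :
    (fromBlocks 1 (-K) (-P) 1)⁻¹ ∈ R.matrix ↔ Q ∈ R.matrix := by
  rw [h.feedback_inv hVNQ hK]
  constructor
  · intro hmem
    have hWinv : fromBlocks M (-U) (-N) V ∈ R.matrix := fromBlocks_mem_subringMatrix.2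
      ⟨h.M_mem, neg_mem h.U_mem, neg_mem h.N_mem, h.V_mem⟩
    have htri : fromBlocks M (M * Q) 0 (V + N * Q) ∈ R.matrix := by
      simpa only [mul_assoc, h.unimodular_mul_unimodular_inv, mul_one] using mul_mem hmem hWinv
    obtain ⟨-, hMQ, -, hVNQ_mem⟩ := fromBlocks_mem_subringMatrix.1 htri
    have hNQ : N * Q ∈ R.matrix := by simpa using sub_mem hVNQ_mem h.V_mem
    obtain ⟨hVM, -, -, -⟩ := fromBlocks_mul_fromBlocks_eq_one_iff.1 h.bezout
    have hQ : Q = Vh * (M * Q) - Uh * (N * Q) := by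
      linear_combination (norm := noncomm_ring) -hVM * Q
    rw [hQ]
    exact sub_mem (mul_mem h.Vh_mem hMQ) (mul_mem h.Uh_mem hNQ)
  · intro hQ
    refine mul_mem (fromBlocks_mem_subringMatrix.2 ?_) (fromBlocks_mem_subringMatrix.2 ?_)
    · exact ⟨h.M_mem, mul_mem h.M_mem hQ, zero_mem _, add_mem h.V_mem (mul_mem h.N_mem hQ)⟩
    · exact ⟨h.Vh_mem, h.Uh_mem, h.Nh_mem, h.Mh_mem⟩

theorem youla_parameterization (h : IsDoublyCoprimeFactorization R P M N U V Mh Nh Uh Vh) :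
    (IsUnit (fromBlocks 1 (-K) (-P) 1) ∧ (fromBlocks 1 (-K) (-P) 1)⁻¹ ∈ R.matrix) ↔
      ∃ Q ∈ R.matrix, IsUnit (V + N * Q) ∧ K = (U + M * Q) * (V + N * Q)⁻¹ := by
  constructor
  · rintro ⟨hunit, hmem⟩
    obtain ⟨hVNQ, hK⟩ :=
      (eq_linearFractional_iff h.bezout).2 ⟨h.isUnit_feedback_iff.1 hunit, rfl⟩
    exact ⟨_, (h.feedback_inv_mem_iff hVNQ hK).1 hmem, hVNQ, hK⟩
  · rintro ⟨Q, hQ, hVNQ, hK⟩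
    exact ⟨h.isUnit_feedback_iff.2 ((eq_linearFractional_iff h.bezout).1 ⟨hVNQ, hK⟩).1,
      (h.feedback_inv_mem_iff hVNQ hK).2 hQ⟩

end CommRing

theorem controller_mem_iff {n F : Type*} [Fintype n] [DecidableEq n] [Field F] {R : Subring F}
    {P M N U V Mh Nh Uh Vh K Q : Matrix n n F}
    (h : IsDoublyCoprimeFactorization R P M N U V Mh Nh Uh Vh) (hQ : Q ∈ R.matrix)
    (hVNQ : IsUnit (V + N * Q)) (hK : K = (U + M * Q) * (V + N * Q)⁻¹) :
    K ∈ R.matrix ↔ (V + N * Q).det⁻¹ ∈ R := by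
  rw [← inv_mem_subringMatrix_iff (add_mem h.V_mem (mul_mem h.N_mem hQ))]
  constructor
  · intro hKmem
    rw [inv_eq_left_inv (linearFractional_denom_mul_denom h.bezout hVNQ hK)]
    exact add_mem h.Mh_mem (mul_mem (neg_mem h.Nh_mem) hKmem)
  · intro hinv
    rw [hK]
    exact mul_mem (add_mem h.U_mem (mul_mem h.M_mem hQ)) hinv

end IsDoublyCoprimeFactorization

section StarRing

variable {A : Type*} [Ring A] [StarRing A] {j k m n q u v x y : A}

theorem star_mul_mul_eq_self_iff_of_mul_eq (hy : IsUnit y) (hk : k * y = x) :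
    star k * j * k = j ↔ star x * j * x = star y * j * y := by
  rw [← hk, star_mul, ← hy.mul_left_inj, ← hy.star.mul_right_inj]
  simp only [mul_assoc]

theorem star_mul_mul_sub_star_mul_mul_eq_quadratic (hj : IsSelfAdjoint j) :
    star (u + m * q) * j * (u + m * q) - star (v + n * q) * j * (v + n * q) =
      (star u * j * u - star v * j * v) + star q * (star m * j * u - star n * j * v)
        + star (star m * j * u - star n * j * v) * q
        + star q * (star m * j * m - star n * j * n) * q := by
  simp only [star_add, star_sub, star_mul, star_star, hj.star_eq]
  noncomm_ring

theorem star_mul_mul_eq_self_iff_quadratic_eq_zero (hj : IsSelfAdjoint j)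
    (hy : IsUnit (v + n * q)) (hk : k * (v + n * q) = u + m * q) :
    star k * j * k = j ↔
      (star u * j * u - star v * j * v) + star q * (star m * j * u - star n * j * v)
        + star (star m * j * u - star n * j * v) * q
        + star q * (star m * j * m - star n * j * n) * q = 0 := by
  rw [star_mul_mul_eq_self_iff_of_mul_eq hy hk, ← sub_eq_zero,
    star_mul_mul_sub_star_mul_mul_eq_quadratic hj]

end StarRing

theorem polyTilde_polyTilde (p : ℂ[X]) : polyTilde (polyTilde p) = p := by
  simp [polyTilde, Polynomial.map_comp, Polynomial.map_map, Polynomial.comp_assoc]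

/-- The involution `~` on polynomials as a ring homomorphism. -/
noncomputable def polyTildeHom : ℂ[X] →+* ℂ[X] :=
  (compRingHom (-X)).comp (mapRingHom (starRingEnd ℂ))

theorem polyTildeHom_injective : Function.Injective polyTildeHom :=
  Function.LeftInverse.injective (g := polyTilde) polyTilde_polyTilde

theorem nonZeroDivisors_le_comap_polyTildeHom :
    nonZeroDivisors ℂ[X] ≤ (nonZeroDivisors ℂ[X]).comap polyTildeHom :=
  nonZeroDivisors_le_comap_nonZeroDivisors_of_injective _ polyTildeHom_injective

/-- The involution `~` on rational functions as a ring homomorphism, extended from polynomials by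
the universal property of the field of fractions. -/
noncomputable def ratTildeHom : RatFunc ℂ →+* RatFunc ℂ :=
  RatFunc.mapRingHom polyTildeHom nonZeroDivisors_le_comap_polyTildeHom

theorem ratTildeHom_apply (f : RatFunc ℂ) : ratTildeHom f = ratTilde f :=
  RatFunc.map_apply polyTildeHom nonZeroDivisors_le_comap_polyTildeHom f

theorem ratTilde_algebraMap_div (p q : ℂ[X]) :
    ratTilde (algebraMap _ _ p / algebraMap _ _ q) =
      algebraMap _ _ (polyTilde p) / algebraMap _ _ (polyTilde q) := by
  rw [← ratTildeHom_apply]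
  exact RatFunc.map_apply_div polyTildeHom nonZeroDivisors_le_comap_polyTildeHom p q

theorem ratTilde_ratTilde (f : RatFunc ℂ) : ratTilde (ratTilde f) = f := by
  rw [ratTilde.eq_1 f, ratTilde_algebraMap_div, polyTilde_polyTilde, polyTilde_polyTilde,
    RatFunc.num_div_denom]

/-- The star ring structure on `ℂ(s)` whose star operation is the involution `~`. For it,
`matConjTransfer` is the conjugate transpose of matrices. -/
@[reducible]
noncomputable def ratTildeStarRing : StarRing (RatFunc ℂ) where
  star := ratTilde
  star_involutive := ratTilde_ratTilde
  star_mul f g := by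
    simp only [← ratTildeHom_apply, map_mul, mul_comm]
  star_add f g := by
    simp only [← ratTildeHom_apply, map_add]

section ConjTransfer

attribute [local instance] ratTildeStarRing

variable {n : Type*}

theorem matConjTransfer_eq_star (A : Matrix n n (RatFunc ℂ)) : matConjTransfer A = star A :=
  rfl

theorem matConjTransfer_signature [DecidableEq n] :
    matConjTransfer (fromBlocks 1 0 0 (-1) : Matrix (n ⊕ n) (n ⊕ n) (RatFunc ℂ)) =
      fromBlocks 1 0 0 (-1) :=
  IsHermitian.fromBlocks isHermitian_one conjTranspose_zero isHermitian_one.neg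

theorem matConjTransfer_mul_mul_eq_self_iff [Fintype n] [DecidableEq n]
    {J K M N U V Q : Matrix n n (RatFunc ℂ)} (hJ : matConjTransfer J = J)
    (hVNQ : IsUnit (V + N * Q)) (hK : K = (U + M * Q) * (V + N * Q)⁻¹) :
    matConjTransfer K * J * K = J ↔
      (matConjTransfer U * J * U - matConjTransfer V * J * V)
        + matConjTransfer Q * (matConjTransfer M * J * U - matConjTransfer N * J * V)
        + matConjTransfer (matConjTransfer M * J * U - matConjTransfer N * J * V) * Q
        + matConjTransfer Q * (matConjTransfer M * J * M - matConjTransfer N * J * N) * Q = 0 := by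
  have hKmul : K * (V + N * Q) = U + M * Q := by
    rw [hK, nonsing_inv_mul_cancel_right _ _ ((isUnit_iff_isUnit_det _).1 hVNQ)]
  simpa only [matConjTransfer_eq_star] using
    star_mul_mul_eq_self_iff_quadratic_eq_zero hJ hVNQ hKmul

end ConjTransfer

section RationalFunctions

variable {k : Type*} [Field k]

theorem inv_mem_valuationInteger_iff {Γ : Type*} [LinearOrderedCommGroupWithZero Γ]
    {v : Valuation k Γ} {x : k} (hx : x ∈ v.integer) (hx0 : x ≠ 0) :
    x⁻¹ ∈ v.integer ↔ v x = 1 := by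
  rw [Valuation.mem_integer_iff] at hx ⊢
  rw [map_inv₀, inv_le_one₀ (by simpa [zero_lt_iff] using hx0)]
  exact hx.ge_iff_eq

variable [DecidableEq (RatFunc k)]

theorem mem_inftyValuation_integer_iff {f : RatFunc k} :
    f ∈ (RatFunc.inftyValuation k).integer ↔ f.num.degree ≤ f.denom.degree := by
  rw [Valuation.mem_integer_iff, RatFunc.inftyValuation_apply]
  rcases eq_or_ne f 0 with rfl | hf
  · simp [RatFunc.inftyValuationDef]
  · rw [RatFunc.inftyValuation_of_nonzero k hf, ← WithZero.exp_zero, WithZero.exp_le_exp,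
      RatFunc.intDegree, degree_eq_natDegree (RatFunc.num_ne_zero hf),
      degree_eq_natDegree f.denom_ne_zero, Nat.cast_le, sub_nonpos, Nat.cast_le]

theorem inftyValuation_eq_one_iff {f : RatFunc k} :
    RatFunc.inftyValuation k f = 1 ↔ f.num.degree = f.denom.degree := by
  rw [RatFunc.inftyValuation_apply]
  rcases eq_or_ne f 0 with rfl | hf
  · simp [RatFunc.inftyValuationDef]
  · rw [RatFunc.inftyValuation_of_nonzero k hf, ← WithZero.exp_zero, WithZero.exp_inj,
      RatFunc.intDegree, degree_eq_natDegree (RatFunc.num_ne_zero hf),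
      degree_eq_natDegree f.denom_ne_zero, Nat.cast_inj, sub_eq_zero, Nat.cast_inj]

end RationalFunctions

/-- The rational functions all of whose poles lie in `S`. -/
def polesInSubring {k : Type*} [Field k] (S : Set k) : Subring (RatFunc k) where
  carrier := {f | ∀ z, f.denom.IsRoot z → z ∈ S}
  zero_mem' := by simp
  one_mem' := by simp
  add_mem' {f g} hf hg z hz :=
    (root_mul.1 (hz.dvd (RatFunc.denom_add_dvd f g))).elim (hf z) (hg z)
  mul_mem' {f g} hf hg z hz :=
    (root_mul.1 (hz.dvd (RatFunc.denom_mul_dvd f g))).elim (hf z) (hg z)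
  neg_mem' {f} hf z hz := by
    have hdvd : (-f).denom ∣ f.denom := (RatFunc.denom_dvd f.denom_ne_zero).2
      ⟨-f.num, by rw [map_neg, neg_div, RatFunc.num_div_denom]⟩
    exact hf z (hz.dvd hdvd)

open scoped Classical in
/-- The ring of proper rational functions: the valuation ring of the place at infinity. -/
noncomputable def properSubring : Subring (RatFunc ℂ) :=
  (RatFunc.inftyValuation ℂ).integer

/-- The ring `RH∞` of proper rational functions with all poles in the open left half-plane. -/
noncomputable def rhInfSubring : Subring (RatFunc ℂ) :=
  polesInSubring {z | z.re < 0} ⊓ properSubring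

theorem mem_properSubring {f : RatFunc ℂ} : f ∈ properSubring ↔ IsProper f := by
  classical exact mem_inftyValuation_integer_iff

theorem rhInfSubring_le_properSubring : rhInfSubring ≤ properSubring :=
  inf_le_right

theorem mem_rhInfSubring {f : RatFunc ℂ} : f ∈ rhInfSubring ↔ IsRHInf f := by
  constructor
  · rintro ⟨hpoles, hproper⟩
    exact .inr ⟨hpoles, mem_properSubring.1 hproper⟩
  · rintro (rfl | ⟨hpoles, hproper⟩)
    · exact zero_mem _
    · exact ⟨hpoles, mem_properSubring.2 hproper⟩

theorem inv_mem_properSubring_iff {f : RatFunc ℂ} (hf : f ∈ properSubring) (hf0 : f ≠ 0) :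
    f⁻¹ ∈ properSubring ↔ f.num.degree = f.denom.degree := by
  classical exact (inv_mem_valuationInteger_iff hf hf0).trans inftyValuation_eq_one_iff

section ControllerParameterization

variable {n : Type*} [Fintype n] [DecidableEq n]
  {J P M N U V Mh Nh Uh Vh K Q : Matrix n n (RatFunc ℂ)}

theorem mem_rhInfSubring_matrix : Q ∈ rhInfSubring.matrix ↔ ∀ i j, IsRHInf (Q i j) :=
  forall₂_congr fun _ _ => mem_rhInfSubring

theorem internallyStabilizes_iff_exists_youla_parameter
    (h : IsDoublyCoprimeFactorization rhInfSubring P M N U V Mh Nh Uh Vh) :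
    InternallyStabilizes P K ↔
      ∃ Q, (∀ i j, IsRHInf (Q i j)) ∧ IsUnit (V + N * Q) ∧
        K = (U + M * Q) * (V + N * Q)⁻¹ := by
  simpa only [InternallyStabilizes, mem_rhInfSubring_matrix] using
    h.youla_parameterization (K := K)

theorem forall_isProper_iff_degree_det_eq
    (h : IsDoublyCoprimeFactorization rhInfSubring P M N U V Mh Nh Uh Vh)
    (hQ : ∀ i j, IsRHInf (Q i j)) (hVNQ : IsUnit (V + N * Q))
    (hK : K = (U + M * Q) * (V + N * Q)⁻¹) :
    (∀ i j, IsProper (K i j)) ↔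
      (V + N * Q).det.num.degree = (V + N * Q).det.denom.degree := by
  have hproper := h.mono rhInfSubring_le_properSubring
  have hQ_mem : Q ∈ properSubring.matrix := fun i j =>
    rhInfSubring_le_properSubring (mem_rhInfSubring.2 (hQ i j))
  have hdet_mem : (V + N * Q).det ∈ properSubring :=
    det_mem_of_mem_subringMatrix (add_mem hproper.V_mem (mul_mem hproper.N_mem hQ_mem))
  have hdet_ne : (V + N * Q).det ≠ 0 := ((isUnit_iff_isUnit_det _).1 hVNQ).ne_zero
  calc (∀ i j, IsProper (K i j)) ↔ K ∈ properSubring.matrix :=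
        forall₂_congr fun _ _ => mem_properSubring.symm
    _ ↔ (V + N * Q).det⁻¹ ∈ properSubring := hproper.controller_mem_iff hQ_mem hVNQ hK
    _ ↔ _ := inv_mem_properSubring_iff hdet_mem hdet_ne

theorem stabilizing_jj_unitary_controllers_parameterization_general
    (hJ : matConjTransfer J = J)
    (h : IsDoublyCoprimeFactorization rhInfSubring P M N U V Mh Nh Uh Vh) :
    (InternallyStabilizes P K ∧ matConjTransfer K * J * K = J
        ∧ (∀ i j, IsProper (K i j)))
      ↔ ∃ Q : Matrix n n (RatFunc ℂ),
          (∀ i j, IsRHInf (Q i j))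
            ∧ IsUnit (V + N * Q)
            ∧ (V + N * Q).det.num.degree = (V + N * Q).det.denom.degree
            ∧ (matConjTransfer U * J * U - matConjTransfer V * J * V)
                + matConjTransfer Q * (matConjTransfer M * J * U - matConjTransfer N * J * V)
                + matConjTransfer (matConjTransfer M * J * U - matConjTransfer N * J * V) * Q
                + matConjTransfer Q * (matConjTransfer M * J * M - matConjTransfer N * J * N) * Q
                  = 0
            ∧ K = (U + M * Q) * (V + N * Q)⁻¹ := by
  rw [internallyStabilizes_iff_exists_youla_parameter h]
  constructor
  · rintro ⟨⟨Q, hQ, hVNQ, hK⟩, hunitary, hproper⟩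
    exact ⟨Q, hQ, hVNQ, (forall_isProper_iff_degree_det_eq h hQ hVNQ hK).1 hproper,
      (matConjTransfer_mul_mul_eq_self_iff hJ hVNQ hK).1 hunitary, hK⟩
  · rintro ⟨Q, hQ, hVNQ, hdegree, hquadratic, hK⟩
    exact ⟨⟨Q, hQ, hVNQ, hK⟩, (matConjTransfer_mul_mul_eq_self_iff hJ hVNQ hK).2 hquadratic,
      (forall_isProper_iff_degree_det_eq h hQ hVNQ hK).2 hdegree⟩

end ControllerParameterization

/-- Parameterization of all stabilizing `(J,J)`-unitary
controllers with well-defined feedthrough: given a doubly coprime factorization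
of the plant `P` over `RH∞` satisfying the general Bézout identity, a
2μ×2μ matrix `K` over the rational functions internally stabilizes `P`, is
`(J,J)`-unitary and has all entries proper iff `K = (U + MQ)(V + NQ)⁻¹`, where
`Q` has entries in `RH∞`, `V + NQ` is invertible with `det (V + NQ)` having a
nonzero finite value at infinity (equal numerator and denominator degrees), and
`Φ + Q~Λ + Λ~Q + Q~ΠQ = 0` with `Φ = U~JU - V~JV`, `Λ = M~JU - N~JV`,
`Π = M~JM - N~JN`. -/
theorem stabilizing_jj_unitary_controllers_parameterization (μ : ℕ)
    (J P M N U V Mh Nh Uh Vh :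
      Matrix (Fin μ ⊕ Fin μ) (Fin μ ⊕ Fin μ) (RatFunc ℂ))
    (hJ : J = Matrix.fromBlocks 1 0 0 (-1))
    (hMs : ∀ i j, IsRHInf (M i j)) (hNs : ∀ i j, IsRHInf (N i j))
    (hUs : ∀ i j, IsRHInf (U i j)) (hVs : ∀ i j, IsRHInf (V i j))
    (hMhs : ∀ i j, IsRHInf (Mh i j)) (hNhs : ∀ i j, IsRHInf (Nh i j))
    (hUhs : ∀ i j, IsRHInf (Uh i j)) (hVhs : ∀ i j, IsRHInf (Vh i j))
    (hM : IsUnit M) (hMh : IsUnit Mh)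
    (hPr : P = N * M⁻¹) (hPl : P = Mh⁻¹ * Nh)
    (hBezout : Matrix.fromBlocks Vh (-Uh) (-Nh) Mh *
        Matrix.fromBlocks M U N V = 1)
    (Phi Lam Pim : Matrix (Fin μ ⊕ Fin μ) (Fin μ ⊕ Fin μ) (RatFunc ℂ))
    (hPhi : Phi = matConjTransfer U * J * U - matConjTransfer V * J * V)
    (hLam : Lam = matConjTransfer M * J * U - matConjTransfer N * J * V)
    (hPim : Pim = matConjTransfer M * J * M - matConjTransfer N * J * N)
    (K : Matrix (Fin μ ⊕ Fin μ) (Fin μ ⊕ Fin μ) (RatFunc ℂ)) :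
    (InternallyStabilizes P K ∧ matConjTransfer K * J * K = J
        ∧ (∀ i j, IsProper (K i j)))
      ↔ ∃ Q : Matrix (Fin μ ⊕ Fin μ) (Fin μ ⊕ Fin μ) (RatFunc ℂ),
          (∀ i j, IsRHInf (Q i j))
            ∧ IsUnit (V + N * Q)
            ∧ (V + N * Q).det.num.degree = (V + N * Q).det.denom.degree
            ∧ Phi + matConjTransfer Q * Lam + matConjTransfer Lam * Q
                + matConjTransfer Q * Pim * Q = 0
            ∧ K = (U + M * Q) * (V + N * Q)⁻¹ := by
  subst hJ hPhi hLam hPim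
  rw [← mem_rhInfSubring_matrix] at hMs hNs hUs hVs hMhs hNhs hUhs hVhs
  exact stabilizing_jj_unitary_controllers_parameterization_general matConjTransfer_signature
    ⟨hMs, hNs, hUs, hVs, hMhs, hNhs, hUhs, hVhs, hM, hPr, hBezout⟩
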